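/- arXiv:1703.10434 — 2 statements merged into one kernel-verified Lean document; each statement's English description precedes it below -/
import Mathlib

section
/- Strong Wigner–Araki–Yanase theorem: Let U be a unitary on ℂ^{d_S}⊗ℂ^{d_A}, ϕ ∈ ℂ^{d_A} a unit vector, F an effect on ℂ^{d_A} (pointer effect), and let E be the effect on ℂ^{d_S} determined by the probability reproducibility condition ⟨φ, E φ⟩ = ⟨U(φ ⊗ ϕ), (1 ⊗ F) U(φ ⊗ ϕ)⟩ for all φ ∈ ℂ^{d_S}. If V is a unitary on ℂ^{d_S} such that U·(V ⊗ 1) = (V ⊗ 1)·U, then V E V* = E. In particular, if the conservation law [U, exp(itL_S) ⊗ 1] = 0 holds for all t ∈ ℝ for a Hermitian L_S, then every effect measurable by such a scheme is invariant: exp(itL_S) E exp(−itL_S) = E for all t. -/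
open Matrix
open scoped Kronecker ComplexOrder

noncomputable section

/-- The tensor product of vectors: `(φ ⊗ ϕ)(i,j) = φ i · ϕ j`. -/
def vtens {dS dA : ℕ} (φ : Fin dS → ℂ) (ϕ : Fin dA → ℂ) : Fin dS × Fin dA → ℂ :=
  fun p => φ p.1 * ϕ p.2

/-- Matrix exponential, `exp M = ∑ₖ Mᵏ/k!`. -/
def mexp {d : ℕ} (M : Matrix (Fin d) (Fin d) ℂ) : Matrix (Fin d) (Fin d) ℂ :=
  ∑' k : ℕ, ((k.factorial : ℂ))⁻¹ • M ^ k

theorem way_polar {d : ℕ} (M : Matrix (Fin d) (Fin d) ℂ)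
    (h : ∀ φ : Fin d → ℂ, star φ ⬝ᵥ M.mulVec φ = 0) : M = 0 := by
  ext i j
  have key : ∀ x y : Fin d → ℂ, star x ⬝ᵥ M.mulVec y = 0 := by
    intro x y
    have h1 := h (x + y)
    have h2 := h (x + Complex.I • y)
    simp only [star_add, star_smul, Matrix.mulVec_add, Matrix.mulVec_smul, add_dotProduct,
      dotProduct_add, smul_dotProduct, dotProduct_smul, h x, h y, smul_eq_mul,
      Complex.star_def, Complex.conj_I] at h1 h2
    linear_combination (1/2 : ℂ) * h1 - (1/2 : ℂ) * Complex.I * h2 - (1/2 : ℂ) * (star x ⬝ᵥ M.mulVec y) * (-Complex.I_sq) - (1/2 : ℂ) * (star y ⬝ᵥ M.mulVec x) * Complex.I_sq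
  have := key (Pi.single i 1) (Pi.single j 1)
  simpa [← Pi.single_star] using this

theorem way_vtens {dS dA : ℕ} (V : Matrix (Fin dS) (Fin dS) ℂ) (φ : Fin dS → ℂ)
    (ϕ : Fin dA → ℂ) :
    vtens (V.mulVec φ) ϕ = (V ⊗ₖ (1 : Matrix (Fin dA) (Fin dA) ℂ)).mulVec (vtens φ ϕ) := by
  ext ⟨i, j⟩
  simp [vtens, Matrix.mulVec, dotProduct, Fintype.sum_prod_type, Matrix.one_apply,
    Finset.sum_mul, mul_assoc]

theorem way_conj {n : Type*} [Fintype n] (A W : Matrix n n ℂ) (x : n → ℂ) :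
    star (W.mulVec x) ⬝ᵥ A.mulVec (W.mulVec x) = star x ⬝ᵥ (Wᴴ * A * W).mulVec x := by
  rw [Matrix.star_mulVec, ← Matrix.dotProduct_mulVec]
  simp only [Matrix.mulVec_mulVec, Matrix.mul_assoc]

theorem way_mexp {d : ℕ} (M : Matrix (Fin d) (Fin d) ℂ) : mexp M = NormedSpace.exp M := by
  rw [NormedSpace.exp_eq_tsum ℂ]; rfl

theorem way_mexp_unitary {d : ℕ} (L : Matrix (Fin d) (Fin d) ℂ) (hL : L.IsHermitian) (t : ℝ) :
    mexp ((Complex.I * (t : ℂ)) • L) ∈ Matrix.unitaryGroup (Fin d) ℂ := by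
  rw [Matrix.mem_unitaryGroup_iff, way_mexp, Matrix.star_eq_conjTranspose,
    ← Matrix.exp_conjTranspose, Matrix.conjTranspose_smul, hL.eq]
  have : star (Complex.I * (t : ℂ)) • L = -((Complex.I * (t : ℂ)) • L) := by
    simp [← neg_smul]
  rw [this, ← Matrix.exp_add_of_commute _ _
    (Commute.neg_right (Commute.refl ((Complex.I * (t : ℂ)) • L))), add_neg_cancel,
    NormedSpace.exp_zero]

/-- **Strong Wigner–Araki–Yanase theorem**: if every measurement coupling commutes with
`V ⊗ 1`, the measured effect `E` is `V`-invariant; in particular, conservation of a Hermitian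
`L_S` on the system alone forces `exp(itL_S) E exp(−itL_S) = E` for all `t`. -/
theorem strong_WAY {dS dA : ℕ}
    (U : Matrix (Fin dS × Fin dA) (Fin dS × Fin dA) ℂ)
    (hU : U ∈ Matrix.unitaryGroup (Fin dS × Fin dA) ℂ)
    (ϕ : Fin dA → ℂ) (hϕ : star ϕ ⬝ᵥ ϕ = 1)
    (F : Matrix (Fin dA) (Fin dA) ℂ) (hF : F.PosSemidef ∧ (1 - F).PosSemidef)
    (E : Matrix (Fin dS) (Fin dS) ℂ) (hEeff : E.PosSemidef ∧ (1 - E).PosSemidef)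
    (hE : ∀ φ : Fin dS → ℂ,
      star φ ⬝ᵥ E.mulVec φ
        = star (U.mulVec (vtens φ ϕ)) ⬝ᵥ
            (((1 : Matrix (Fin dS) (Fin dS) ℂ) ⊗ₖ F).mulVec (U.mulVec (vtens φ ϕ)))) :
    (∀ V : Matrix (Fin dS) (Fin dS) ℂ, V ∈ Matrix.unitaryGroup (Fin dS) ℂ →
      U * (V ⊗ₖ (1 : Matrix (Fin dA) (Fin dA) ℂ))
        = (V ⊗ₖ (1 : Matrix (Fin dA) (Fin dA) ℂ)) * U →
      V * E * Vᴴ = E) ∧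
    (∀ LS : Matrix (Fin dS) (Fin dS) ℂ, LS.IsHermitian →
      (∀ t : ℝ, U * (mexp ((Complex.I * (t : ℂ)) • LS) ⊗ₖ (1 : Matrix (Fin dA) (Fin dA) ℂ))
        = (mexp ((Complex.I * (t : ℂ)) • LS) ⊗ₖ (1 : Matrix (Fin dA) (Fin dA) ℂ)) * U) →
      ∀ t : ℝ, mexp ((Complex.I * (t : ℂ)) • LS) * E * (mexp ((Complex.I * (t : ℂ)) • LS))ᴴ
        = E) := by
  have main : ∀ V : Matrix (Fin dS) (Fin dS) ℂ, V ∈ Matrix.unitaryGroup (Fin dS) ℂ →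
      U * (V ⊗ₖ (1 : Matrix (Fin dA) (Fin dA) ℂ))
        = (V ⊗ₖ (1 : Matrix (Fin dA) (Fin dA) ℂ)) * U →
      V * E * Vᴴ = E := by
    intro V hV hc
    have hV1 : Vᴴ * V = 1 := Matrix.mem_unitaryGroup_iff'.1 hV
    have hV2 : V * Vᴴ = 1 := Matrix.mem_unitaryGroup_iff.1 hV
    have hz : Vᴴ * E * V - E = 0 := by
      apply way_polar
      intro φ
      have h := hE (V.mulVec φ)
      have hW : (V ⊗ₖ (1 : Matrix (Fin dA) (Fin dA) ℂ))ᴴ *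
          (((1 : Matrix (Fin dS) (Fin dS) ℂ) ⊗ₖ F) * (V ⊗ₖ (1 : Matrix (Fin dA) (Fin dA) ℂ)))
          = (1 : Matrix (Fin dS) (Fin dS) ℂ) ⊗ₖ F := by
        rw [Matrix.conjTranspose_kronecker, ← Matrix.mul_kronecker_mul,
          ← Matrix.mul_kronecker_mul]
        simp [hV1]
      have hu : U.mulVec (vtens (V.mulVec φ) ϕ)
          = (V ⊗ₖ (1 : Matrix (Fin dA) (Fin dA) ℂ)).mulVec (U.mulVec (vtens φ ϕ)) := by
        rw [way_vtens, Matrix.mulVec_mulVec, hc, ← Matrix.mulVec_mulVec]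
      rw [hu, way_conj, way_conj, Matrix.mul_assoc _ᴴ (_ ⊗ₖ F), hW, ← hE] at h
      rw [Matrix.sub_mulVec, dotProduct_sub, h, sub_self]
    have hz' := sub_eq_zero.1 hz
    calc V * E * Vᴴ = V * (Vᴴ * E * V) * Vᴴ := by rw [hz']
      _ = (V * Vᴴ) * E * (V * Vᴴ) := by simp only [Matrix.mul_assoc]
      _ = E := by simp [hV2]
  exact ⟨main, fun LS hLS hc t => main _ (way_mexp_unitary LS hLS t) (hc t)⟩

end
end

section
/- Wigner–Araki–Yanase theorem: Let A be a Hermitian matrix on ℂ^{d_S} with spectral decomposition A = Σ_λ λ·P_λ, and let ⟨ℂ^{d_A}, U, ϕ, Z⟩ be a measurement scheme for A: U is a unitary on ℂ^{d_S}⊗ℂ^{d_A}, ϕ ∈ ℂ^{d_A} a unit vector, and Z a Hermitian pointer with spectral projections (Q_λ) indexed by the eigenvalues λ of A, satisfying probability reproducibility: ‖(1 ⊗ Q_λ) U(φ ⊗ ϕ)‖² = ‖P_λ φ‖² for all φ ∈ ℂ^{d_S} and all eigenvalues λ. Let L_S on ℂ^{d_S} and L_A on ℂ^{d_A} be Hermitian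 with the conservation law [U, L_S ⊗ 1 + 1 ⊗ L_A] = 0. If either the measurement is repeatable (⟨U(φ ⊗ ϕ), (P_λ ⊗ Q_λ) U(φ ⊗ ϕ)⟩ = ‖P_λ φ‖² for all φ and λ) or the Yanase condition [Q_λ, L_A] = 0 holds for all λ, then [A, L_S] = 0. -/
open Matrix
open scoped Kronecker ComplexOrder

noncomputable section

/-- The isometry `φ ↦ φ ⊗ ϕ` as a matrix. -/
def wayJ {dS dA : ℕ} (ϕ : Fin dA → ℂ) : Matrix (Fin dS × Fin dA) (Fin dS) ℂ :=
  fun p s => (1 : Matrix (Fin dS) (Fin dS) ℂ) p.1 s * ϕ p.2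

theorem wayJ_mulVec {dS dA : ℕ} (φ : Fin dS → ℂ) (ϕ : Fin dA → ℂ) :
    (wayJ ϕ).mulVec φ = vtens φ ϕ := by
  ext ⟨a, b⟩
  simp [wayJ, vtens, Matrix.mulVec, dotProduct, Matrix.one_apply, mul_comm]

set_option linter.unusedSimpArgs false in
theorem wayJ_conj {dS dA : ℕ} (ϕ : Fin dA → ℂ) (X : Matrix (Fin dS) (Fin dS) ℂ)
    (Y : Matrix (Fin dA) (Fin dA) ℂ) :
    Matrix.conjTranspose (wayJ (dS := dS) ϕ) * (X ⊗ₖ Y) * wayJ (dS := dS) ϕ = (star ϕ ⬝ᵥ Y.mulVec ϕ) • X := by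
  ext a c
  simp only [wayJ, Matrix.mul_apply, Matrix.conjTranspose_apply, Matrix.one_apply,
    Fintype.sum_prod_type, Matrix.kroneckerMap_apply, Matrix.smul_apply, dotProduct,
    Matrix.mulVec, smul_eq_mul, Pi.star_apply, star_mul', ite_mul, one_mul, zero_mul,
    apply_ite star, star_one, star_zero, Finset.sum_ite_irrel, Finset.sum_const_zero,
    Finset.sum_ite_eq, Finset.sum_ite_eq', Finset.mem_univ, if_true, mul_ite, mul_zero,
    Finset.sum_mul, Finset.mul_sum]
  rw [Finset.sum_comm]
  refine Finset.sum_congr rfl fun x _ => Finset.sum_congr rfl fun y _ => ?_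
  ring

theorem way_zero {m n : Type*} [Fintype m] [Fintype n] (W : Matrix m n ℂ)
    (h : ∀ x, star (W.mulVec x) ⬝ᵥ (W.mulVec x) = 0) : W = 0 := by
  classical
  apply Matrix.ext_of_mulVec_single
  intro i
  rw [Matrix.zero_mulVec]
  exact dotProduct_star_self_eq_zero.1 (h _)

theorem way_star {m : Type*} [Fintype m] (W : Matrix m m ℂ) (x : m → ℂ) :
    star (W.mulVec x) ⬝ᵥ (W.mulVec x) = star x ⬝ᵥ (Wᴴ * W).mulVec x := by
  rw [Matrix.star_mulVec, ← Matrix.dotProduct_mulVec, Matrix.mulVec_mulVec]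

/-- **Wigner–Araki–Yanase theorem**: for a measurement scheme of `A = ∑_λ λ P_λ` obeying the
additive conservation law `[U, L_S ⊗ 1 + 1 ⊗ L_A] = 0`, if the measurement is repeatable or
the Yanase condition `[Q_λ, L_A] = 0` holds, then `[A, L_S] = 0`. -/
theorem wigner_araki_yanase {dS dA : ℕ} {ι : Type*} [Fintype ι] [DecidableEq ι]
    (eval : ι → ℝ) (heval : Function.Injective eval)
    (P : ι → Matrix (Fin dS) (Fin dS) ℂ)
    (hPh : ∀ i, (P i).IsHermitian) (hPi : ∀ i, P i * P i = P i)
    (hPo : ∀ i j, i ≠ j → P i * P j = 0) (hPs : ∑ i, P i = 1)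
    (A : Matrix (Fin dS) (Fin dS) ℂ) (hA : A = ∑ i, ((eval i : ℂ)) • P i)
    (Q : ι → Matrix (Fin dA) (Fin dA) ℂ)
    (hQh : ∀ i, (Q i).IsHermitian) (hQi : ∀ i, Q i * Q i = Q i)
    (hQo : ∀ i j, i ≠ j → Q i * Q j = 0) (hQs : ∑ i, Q i = 1)
    (Z : Matrix (Fin dA) (Fin dA) ℂ) (hZ : Z = ∑ i, ((eval i : ℂ)) • Q i)
    (U : Matrix (Fin dS × Fin dA) (Fin dS × Fin dA) ℂ)
    (hU : U ∈ Matrix.unitaryGroup (Fin dS × Fin dA) ℂ)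
    (ϕ : Fin dA → ℂ) (hϕ : star ϕ ⬝ᵥ ϕ = 1)
    (hprob : ∀ (φ : Fin dS → ℂ) (i : ι),
      star (((1 : Matrix (Fin dS) (Fin dS) ℂ) ⊗ₖ Q i).mulVec (U.mulVec (vtens φ ϕ))) ⬝ᵥ
          (((1 : Matrix (Fin dS) (Fin dS) ℂ) ⊗ₖ Q i).mulVec (U.mulVec (vtens φ ϕ)))
        = star ((P i).mulVec φ) ⬝ᵥ ((P i).mulVec φ))
    (LS : Matrix (Fin dS) (Fin dS) ℂ) (hLS : LS.IsHermitian)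
    (LA : Matrix (Fin dA) (Fin dA) ℂ) (hLA : LA.IsHermitian)
    (hcons : U * (LS ⊗ₖ (1 : Matrix (Fin dA) (Fin dA) ℂ)
        + (1 : Matrix (Fin dS) (Fin dS) ℂ) ⊗ₖ LA)
      = (LS ⊗ₖ (1 : Matrix (Fin dA) (Fin dA) ℂ)
        + (1 : Matrix (Fin dS) (Fin dS) ℂ) ⊗ₖ LA) * U)
    (hway : (∀ (φ : Fin dS → ℂ) (i : ι),
        star (U.mulVec (vtens φ ϕ)) ⬝ᵥ ((P i ⊗ₖ Q i).mulVec (U.mulVec (vtens φ ϕ)))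
          = star ((P i).mulVec φ) ⬝ᵥ ((P i).mulVec φ))
      ∨ (∀ i, Q i * LA = LA * Q i)) :
    A * LS = LS * A := by
  set J : Matrix (Fin dS × Fin dA) (Fin dS) ℂ := wayJ ϕ with hJ
  set V := U * J with hV
  have hVm : ∀ φ, U.mulVec (vtens φ ϕ) = V.mulVec φ := by
    intro φ
    rw [hV, ← Matrix.mulVec_mulVec, hJ, wayJ_mulVec]
  clear_value V
  simp only [hVm] at hprob hway
  have hUU : Uᴴ * U = 1 := by
    have := Matrix.mem_unitaryGroup_iff'.1 hU
    simpa [Matrix.star_eq_conjTranspose] using this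
  set K : ι → Matrix (Fin dS × Fin dA) (Fin dS × Fin dA) ℂ :=
    fun i => (1 : Matrix (Fin dS) (Fin dS) ℂ) ⊗ₖ Q i with hK
  have hKs : ∑ i, K i = 1 := by
    rw [← Matrix.one_kronecker_one, ← hQs]
    ext ⟨a, b⟩ ⟨c, d⟩
    simp [hK, Matrix.sum_apply, Finset.mul_sum]
  have hKV0 : ∀ i j, i ≠ j → K i * V * P j = 0 := by
    intro i j hij
    apply way_zero
    intro x
    have := hprob ((P j).mulVec x) i
    simp only [Matrix.mulVec_mulVec, hPo i j hij, Matrix.zero_mulVec, dotProduct_zero] at this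
    rw [Matrix.mul_assoc]
    simpa [hK, Matrix.mulVec_mulVec] using this
  have hKV : ∀ i, K i * V = V * P i := by
    intro i
    have h1 : K i * V = K i * V * P i := by
      calc K i * V = K i * V * ∑ j, P j := by rw [hPs, Matrix.mul_one]
        _ = K i * V * P i := by
          rw [Matrix.mul_sum, Finset.sum_eq_single i]
          · intro j _ hj; exact hKV0 i j (Ne.symm hj)
          · simp
    have h2 : V * P i = K i * V * P i := by
      calc V * P i = (∑ j, K j) * (V * P i) := by rw [hKs, Matrix.one_mul]
        _ = K i * V * P i := by
          rw [Matrix.sum_mul, Finset.sum_eq_single i, Matrix.mul_assoc]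
          · intro j _ hj; rw [← Matrix.mul_assoc]; exact hKV0 j i hj
          · simp
    rw [h1, h2]
  set L := LS ⊗ₖ (1 : Matrix (Fin dA) (Fin dA) ℂ)
        + (1 : Matrix (Fin dS) (Fin dS) ℂ) ⊗ₖ LA with hL
  have hM : Vᴴ * L * V = LS + (star ϕ ⬝ᵥ LA.mulVec ϕ) • 1 := by
    calc Vᴴ * L * V = Jᴴ * (Uᴴ * (L * U)) * J := by
          simp only [hV, Matrix.conjTranspose_mul, Matrix.mul_assoc]
      _ = Jᴴ * L * J := by rw [← hcons, ← Matrix.mul_assoc Uᴴ, hUU, Matrix.one_mul]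
      _ = _ := by
        rw [hL, Matrix.mul_add, Matrix.add_mul, wayJ_conj, wayJ_conj, Matrix.one_mulVec, hϕ,
          one_smul]
  have key : ∀ i j, i ≠ j → P j * (Vᴴ * L * V) * P i = 0 := by
    intro i j hij
    have hadj : ∀ j, P j * Vᴴ = Vᴴ * K j := by
      intro j
      have := congrArg Matrix.conjTranspose (hKV j)
      simp only [Matrix.conjTranspose_mul, (hPh j).eq, hK, Matrix.conjTranspose_kronecker,
        (hQh j).eq, Matrix.conjTranspose_one] at this
      exact this.symm
    rcases hway with hrep | hyan
    · set R : ι → Matrix (Fin dS × Fin dA) (Fin dS × Fin dA) ℂ := fun i => P i ⊗ₖ Q i with hR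
      have hRV : ∀ i, K i * V = R i * V := by
        intro i
        rw [← sub_eq_zero, ← Matrix.sub_mul]
        apply way_zero
        intro x
        have hKh : (K i)ᴴ = K i := by
          simp [hK, Matrix.conjTranspose_kronecker, (hQh i).eq]
        have hRh : (R i)ᴴ = R i := by
          simp [hR, Matrix.conjTranspose_kronecker, (hQh i).eq, (hPh i).eq]
        have hKK : K i * K i = K i := by
          simp [hK, ← Matrix.mul_kronecker_mul, hQi]
        have hKR : K i * R i = R i := by
          simp [hK, hR, ← Matrix.mul_kronecker_mul, hQi]
        have hRK : R i * K i = R i := by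
          simp [hK, hR, ← Matrix.mul_kronecker_mul, hQi]
        have hRR : R i * R i = R i := by
          simp [hR, ← Matrix.mul_kronecker_mul, hQi, hPi]
        have hD : (K i - R i)ᴴ * (K i - R i) = K i - R i := by
          rw [Matrix.conjTranspose_sub, hKh, hRh, Matrix.sub_mul, Matrix.mul_sub, Matrix.mul_sub,
            hKK, hKR, hRK, hRR]; simp
        have hp := hprob x i
        have hr := hrep x i
        have hp2 : star (V.mulVec x) ⬝ᵥ (K i).mulVec (V.mulVec x)
            = star ((P i).mulVec x) ⬝ᵥ ((P i).mulVec x) := by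
          rw [← hp, way_star, hKh, hKK]
        rw [← Matrix.mulVec_mulVec, way_star, hD, Matrix.sub_mulVec, dotProduct_sub, hp2, hr,
          sub_self]
      have hRadj : ∀ j, Vᴴ * K j = Vᴴ * R j := by
        intro j
        have := congrArg Matrix.conjTranspose (hRV j)
        simpa [Matrix.conjTranspose_mul, hK, hR, Matrix.conjTranspose_kronecker,
          (hQh j).eq, (hPh j).eq] using this
      have h0 : R j * L * R i = 0 := by
        simp only [hR, hL, Matrix.mul_add, Matrix.add_mul, ← Matrix.mul_kronecker_mul,
          Matrix.mul_one, hQo j i (Ne.symm hij), hPo j i (Ne.symm hij), Matrix.kronecker_zero,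
          Matrix.zero_kronecker, add_zero]
      calc P j * (Vᴴ * L * V) * P i = (P j * Vᴴ) * L * (V * P i) := by
            simp only [Matrix.mul_assoc]
        _ = Vᴴ * (R j * L * R i) * V := by
            rw [hadj, ← hKV, hRadj, hRV]; simp only [Matrix.mul_assoc]
        _ = 0 := by rw [h0]; simp
    · have h0 : K j * L * K i = 0 := by
        simp only [hK, hL, Matrix.mul_add, Matrix.add_mul, ← Matrix.mul_kronecker_mul,
          Matrix.mul_one, Matrix.one_mul]
        rw [hyan j, Matrix.mul_assoc, hQo j i (Ne.symm hij)]
        simp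
      calc P j * (Vᴴ * L * V) * P i = (P j * Vᴴ) * L * (V * P i) := by
            simp only [Matrix.mul_assoc]
        _ = Vᴴ * (K j * L * K i) * V := by
            rw [hadj, ← hKV]; simp only [Matrix.mul_assoc]
        _ = 0 := by rw [h0]; simp
  have key2 : ∀ i j, i ≠ j → P j * LS * P i = 0 := by
    intro i j hij
    have := key i j hij
    rw [hM] at this
    simpa [Matrix.mul_add, Matrix.add_mul, hPo j i (Ne.symm hij)] using this
  have hcomm : ∀ i, P i * LS = LS * P i := by
    intro i
    have h1 : P i * LS = P i * LS * P i := by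
      calc P i * LS = P i * LS * ∑ j, P j := by rw [hPs, Matrix.mul_one]
        _ = P i * LS * P i := by
          rw [Matrix.mul_sum, Finset.sum_eq_single i]
          · intro j _ hj; exact key2 j i hj
          · simp
    have h2 : LS * P i = P i * LS * P i := by
      calc LS * P i = (∑ j, P j) * (LS * P i) := by rw [hPs, Matrix.one_mul]
        _ = P i * LS * P i := by
          rw [Matrix.sum_mul, Finset.sum_eq_single i, Matrix.mul_assoc]
          · intro j _ hj; rw [← Matrix.mul_assoc]; exact key2 i j (Ne.symm hj)
          · simp
    rw [h1, h2]
  rw [hA, Finset.sum_mul, Finset.mul_sum]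
  refine Finset.sum_congr rfl fun i _ => ?_
  rw [Matrix.smul_mul, Matrix.mul_smul, hcomm]

end
end
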